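/- Every proper invariant subspace U of W intersects the sector V_0 trivially, i.e. U ∩ V_0 = {0}; and every nonzero proper invariant subspace of W contains the sector V_3. -/

import Mathlib

/-!
`E33 - E11` acts on the highest weight vector of `V_k` by `m33 - m13 + k`, so it separates the four
`gl(2)`-highest weight vectors. A nonzero subspace stable under `E12` contains a nonzero vector
killed by `E12`, i.e. a combination of these four vectors, and stability under `E33 - E11` isolates
one of them. Lowering by `E21` then fills the whole sector `V_k`. Finally `E32` leads from `V_1` and
from `V_2` to `V_3`, and from `V_0` to every other sector.
-/

noncomputable section

/-- The `q`-number `[x] = (q^x - q^(-x))/(q - q⁻¹)`. -/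
def qn (q : ℝ) (x : ℤ) : ℝ := (q ^ x - q ^ (-x)) / (q - q⁻¹)

/-- The triple `(m12, m22, m32)` attached to the sector `k ∈ {0,1,2,3}`. -/
def trip (m13 m23 m33 : ℤ) : Fin 4 → ℤ × ℤ × ℤ
  | 0 => (m13, m23, m33)
  | 1 => (m13, m23 - 1, m33 + 1)
  | 2 => (m13 - 1, m23, m33 + 1)
  | 3 => (m13 - 1, m23 - 1, m33 + 2)

def M12 (m13 m23 m33 : ℤ) (k : Fin 4) : ℤ := (trip m13 m23 m33 k).1
def M22 (m13 m23 m33 : ℤ) (k : Fin 4) : ℤ := (trip m13 m23 m33 k).2.1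
def M32 (m13 m23 m33 : ℤ) (k : Fin 4) : ℤ := (trip m13 m23 m33 k).2.2

/-- `m11` is in the allowed range `m22 ≤ m11 ≤ m12` of the sector `k`. -/
def InR (m13 m23 m33 : ℤ) (k : Fin 4) (x : ℤ) : Prop :=
  M22 m13 m23 m33 k ≤ x ∧ x ≤ M12 m13 m23 m33 k

instance (m13 m23 m33 : ℤ) (k : Fin 4) (x : ℤ) : Decidable (InR m13 m23 m33 k x) :=
  instDecidableAnd

/-- The index set of the basis `v(k, m11)` of `W`. -/
abbrev Idx (m13 m23 m33 : ℤ) : Type :=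
  {p : Fin 4 × ℤ // InR m13 m23 m33 p.1 p.2}

/-- The module `W = W^q([m13,m23,m33])`, realized as the free complex vector
space on the basis `v(k, m11)`, `k ∈ {0,1,2,3}`, `m22 ≤ m11 ≤ m12`. -/
abbrev Wsp (m13 m23 m33 : ℤ) : Type := Idx m13 m23 m33 →₀ ℂ

/-- The basis vector `v(k, m11)` (zero if `m11` is out of range). -/
def bv (m13 m23 m33 : ℤ) (k : Fin 4) (x : ℤ) : Wsp m13 m23 m33 :=
  if h : InR m13 m23 m33 k x then Finsupp.single ⟨(k, x), h⟩ 1 else 0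

/-- The sector `V_k`, the span of the `v(k, ·)`. -/
def Vk (m13 m23 m33 : ℤ) (k : Fin 4) : Submodule ℂ (Wsp m13 m23 m33) :=
  Submodule.span ℂ (Set.range (bv m13 m23 m33 k))

/-- The Gel'fand--Zetlin realization of the induced `U_q[gl(2/1)]`-module
`W^q([m13,m23,m33])`: seven linear operators acting on the basis `v(k, m11)`
by the stated formulas (terms with `m11` out of range being `0`). -/
structure GZ (q : ℝ) (m13 m23 m33 : ℤ) where
  E11 : Wsp m13 m23 m33 →ₗ[ℂ] Wsp m13 m23 m33
  E22 : Wsp m13 m23 m33 →ₗ[ℂ] Wsp m13 m23 m33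
  E33 : Wsp m13 m23 m33 →ₗ[ℂ] Wsp m13 m23 m33
  E12 : Wsp m13 m23 m33 →ₗ[ℂ] Wsp m13 m23 m33
  E21 : Wsp m13 m23 m33 →ₗ[ℂ] Wsp m13 m23 m33
  E23 : Wsp m13 m23 m33 →ₗ[ℂ] Wsp m13 m23 m33
  E32 : Wsp m13 m23 m33 →ₗ[ℂ] Wsp m13 m23 m33
  hE11 : ∀ (k : Fin 4) (x : ℤ), InR m13 m23 m33 k x →
    E11 (bv m13 m23 m33 k x) = (x : ℂ) • bv m13 m23 m33 k x
  hE22 : ∀ (k : Fin 4) (x : ℤ), InR m13 m23 m33 k x →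
    E22 (bv m13 m23 m33 k x) =
      ((M12 m13 m23 m33 k + M22 m13 m23 m33 k - x : ℤ) : ℂ) • bv m13 m23 m33 k x
  hE33 : ∀ (k : Fin 4) (x : ℤ), InR m13 m23 m33 k x →
    E33 (bv m13 m23 m33 k x) = ((M32 m13 m23 m33 k : ℤ) : ℂ) • bv m13 m23 m33 k x
  hE12 : ∀ (k : Fin 4) (x : ℤ), InR m13 m23 m33 k x →
    E12 (bv m13 m23 m33 k x) =
      ((Real.sqrt (qn q (M12 m13 m23 m33 k - x) * qn q (x - M22 m13 m23 m33 k + 1)) : ℝ) : ℂ) •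
        bv m13 m23 m33 k (x + 1)
  hE21 : ∀ (k : Fin 4) (x : ℤ), InR m13 m23 m33 k x →
    E21 (bv m13 m23 m33 k x) =
      ((Real.sqrt (qn q (M12 m13 m23 m33 k - x + 1) * qn q (x - M22 m13 m23 m33 k)) : ℝ) : ℂ) •
        bv m13 m23 m33 k (x - 1)
  hE23₀ : ∀ x : ℤ, InR m13 m23 m33 0 x → E23 (bv m13 m23 m33 0 x) = 0
  hE23₁ : ∀ x : ℤ, InR m13 m23 m33 1 x →
    E23 (bv m13 m23 m33 1 x) =
      ((Real.sqrt (qn q (x - m23 + 1) / qn q (m13 - m23 + 1)) * qn q (m23 + m33) : ℝ) : ℂ) •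
        bv m13 m23 m33 0 x
  hE23₂ : ∀ x : ℤ, InR m13 m23 m33 2 x →
    E23 (bv m13 m23 m33 2 x) =
      ((Real.sqrt (qn q (m13 - x) / qn q (m13 - m23)) * qn q (m13 + m33 + 1) : ℝ) : ℂ) •
        bv m13 m23 m33 0 x
  hE23₃ : ∀ x : ℤ, InR m13 m23 m33 3 x →
    E23 (bv m13 m23 m33 3 x) =
      ((q⁻¹ * Real.sqrt (qn q (m13 - x) / qn q (m13 - m23 + 1)) * qn q (m13 + m33 + 1) : ℝ) : ℂ) •
          bv m13 m23 m33 1 x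
        - ((q⁻¹ * Real.sqrt (qn q (x - m23 + 1) * qn q (m13 - m23)) *
            (qn q (m23 + m33) / qn q (m13 - m23 + 1)) : ℝ) : ℂ) • bv m13 m23 m33 2 x
  hE32₀ : ∀ x : ℤ, InR m13 m23 m33 0 x →
    E32 (bv m13 m23 m33 0 x) =
      ((Real.sqrt (qn q (x - m23 + 1) / qn q (m13 - m23 + 1)) : ℝ) : ℂ) • bv m13 m23 m33 1 x
        + ((Real.sqrt (qn q (m13 - x) * qn q (m13 - m23)) / qn q (m13 - m23 + 1) : ℝ) : ℂ) •
            bv m13 m23 m33 2 x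
  hE32₁ : ∀ x : ℤ, InR m13 m23 m33 1 x →
    E32 (bv m13 m23 m33 1 x) =
      ((q * Real.sqrt (qn q (m13 - x) / qn q (m13 - m23 + 1)) : ℝ) : ℂ) • bv m13 m23 m33 3 x
  hE32₂ : ∀ x : ℤ, InR m13 m23 m33 2 x →
    E32 (bv m13 m23 m33 2 x) =
      -(((q * Real.sqrt (qn q (x - m23 + 1) / qn q (m13 - m23)) : ℝ) : ℂ) • bv m13 m23 m33 3 x)
  hE32₃ : ∀ x : ℤ, InR m13 m23 m33 3 x → E32 (bv m13 m23 m33 3 x) = 0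

/-- A subspace `U` of `W` is invariant if it is stable under all seven
operators `E11, E22, E33, E12, E21, E23, E32`. -/
def Invariant (q : ℝ) (m13 m23 m33 : ℤ) (R : GZ q m13 m23 m33)
    (U : Submodule ℂ (Wsp m13 m23 m33)) : Prop :=
  ∀ E ∈ ({R.E11, R.E22, R.E33, R.E12, R.E21, R.E23, R.E32} :
      Set (Wsp m13 m23 m33 →ₗ[ℂ] Wsp m13 m23 m33)),
    ∀ x ∈ U, E x ∈ U

section LinearAlgebra

open Polynomial

lemma exists_ne_zero_mem_ker_of_isNilpotent {K V : Type*} [Semiring K] [AddCommMonoid V]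
    [Module K V] {f : Module.End K V} (hf : IsNilpotent f) {U : Submodule K V}
    (hU : U ∈ f.invtSubmodule) (hne : U ≠ ⊥) : ∃ u ∈ U, u ≠ 0 ∧ f u = 0 := by
  obtain ⟨u, hu, hu0⟩ := U.ne_bot_iff.mp hne
  obtain ⟨n, hn⟩ := hf
  by_contra! hker
  have hpow (m : ℕ) : (f ^ m) u ∈ U ∧ (f ^ m) u ≠ 0 := by
    induction m with
    | zero => exact ⟨hu, hu0⟩
    | succ m ih =>
      rw [pow_succ', Module.End.mul_apply]
      exact ⟨hU ih.1, hker _ ih.1 ih.2⟩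
  exact (hpow n).2 (by rw [hn, LinearMap.zero_apply])

lemma mem_invtSubmodule_aeval {K V : Type*} [CommSemiring K] [AddCommMonoid V] [Module K V]
    {f : Module.End K V} {U : Submodule K V} (hU : U ∈ f.invtSubmodule) (P : K[X]) :
    U ∈ (aeval f P).invtSubmodule := by
  intro u hu
  induction P using Polynomial.induction_on' with
  | add P Q hP hQ => simpa using U.add_mem hP hQ
  | monomial n c =>
    have hpow : (f ^ n) u ∈ U := by
      rw [Module.End.pow_apply]
      exact Set.MapsTo.iterate hU n hu
    simpa [aeval_monomial, Module.algebraMap_end_apply] using U.smul_mem c hpow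

lemma mem_of_sum_eigenvectors_mem {K V ι : Type*} [Field K] [AddCommGroup V] [Module K V]
    {f : Module.End K V} {U : Submodule K V} (hU : U ∈ f.invtSubmodule) {s : Finset ι}
    {w : ι → V} {μ : ι → K} (hw : ∀ i ∈ s, f (w i) = μ i • w i) (hμ : Set.InjOn μ s)
    (hsum : ∑ i ∈ s, w i ∈ U) {i : ι} (hi : i ∈ s) : w i ∈ U := by
  classical
  -- `aeval f P` fixes `w i` and kills the other summands.
  set P := Lagrange.basis s μ i
  have haeval : ∀ j ∈ s, aeval f P (w j) = P.eval (μ j) • w j := by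
    intro j hj
    rcases eq_or_ne (w j) 0 with h0 | h0
    · simp only [h0, map_zero, smul_zero]
    · exact Module.End.aeval_apply_of_hasEigenvector
        ⟨Module.End.mem_eigenspace_iff.mpr (hw j hj), h0⟩
  have hproj : aeval f P (∑ j ∈ s, w j) = w i := by
    rw [map_sum, Finset.sum_eq_single_of_mem i hi, haeval i hi, Lagrange.eval_basis_self hμ hi,
      one_smul]
    intro j hj hji
    rw [haeval j hj, Lagrange.eval_basis_of_ne hji.symm hj, zero_smul]
  exact hproj ▸ mem_invtSubmodule_aeval hU P hsum

end LinearAlgebra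

section QNumber

variable {q : ℝ}

lemma qn_inv (x : ℤ) : qn q⁻¹ x = qn q x := by
  rw [qn, qn, inv_zpow', inv_zpow', neg_neg, inv_inv, ← neg_sub, ← neg_sub q, neg_div_neg_eq]

lemma qn_pos (hq : 0 < q) (hq1 : q ≠ 1) {x : ℤ} (hx : 0 < x) : 0 < qn q x := by
  wlog h : 1 < q generalizing q
  · rw [← qn_inv]
    exact this (inv_pos.mpr hq) (inv_ne_one.mpr hq1)
      ((one_lt_inv₀ hq).mpr (lt_of_le_of_ne (not_lt.mp h) hq1))
  · exact div_pos (sub_pos.mpr (zpow_lt_zpow_right₀ h (by omega)))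
      (sub_pos.mpr ((inv_lt_one_of_one_lt₀ h).trans h))

lemma ofReal_sqrt_qn_mul_qn_ne_zero (hq : 0 < q) (hq1 : q ≠ 1) {x y : ℤ} (hx : 0 < x)
    (hy : 0 < y) : ((√(qn q x * qn q y) : ℝ) : ℂ) ≠ 0 :=
  Complex.ofReal_ne_zero.mpr
    (Real.sqrt_pos.mpr (mul_pos (qn_pos hq hq1 hx) (qn_pos hq hq1 hy))).ne'

lemma ofReal_sqrt_qn_div_qn_ne_zero (hq : 0 < q) (hq1 : q ≠ 1) {x y : ℤ} (hx : 0 < x)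
    (hy : 0 < y) : ((√(qn q x / qn q y) : ℝ) : ℂ) ≠ 0 :=
  Complex.ofReal_ne_zero.mpr
    (Real.sqrt_pos.mpr (div_pos (qn_pos hq hq1 hx) (qn_pos hq hq1 hy))).ne'

end QNumber

section Sectors

variable {m13 m23 m33 : ℤ}

lemma bv_of_not_inR {k : Fin 4} {x : ℤ} (h : ¬ InR m13 m23 m33 k x) : bv m13 m23 m33 k x = 0 :=
  dif_neg h

lemma bv_val (p : Idx m13 m23 m33) : bv m13 m23 m33 p.1.1 p.1.2 = Finsupp.single p 1 :=
  dif_pos p.2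

lemma single_eq_smul_bv (p : Idx m13 m23 m33) (c : ℂ) :
    Finsupp.single p c = c • bv m13 m23 m33 p.1.1 p.1.2 := by
  rw [bv_val, Finsupp.smul_single_one]

lemma bv_apply (k : Fin 4) (x : ℤ) (p : Idx m13 m23 m33) :
    bv m13 m23 m33 k x p = if p.1 = (k, x) then 1 else 0 := by
  by_cases hx : InR m13 m23 m33 k x
  · rw [bv_val ⟨(k, x), hx⟩, Finsupp.single_apply]
    simp only [Subtype.ext_iff, eq_comm]
  · rw [bv_of_not_inR hx, Finsupp.zero_apply, if_neg fun h => hx (by simpa only [h] using p.2)]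

lemma linearMap_ext_bv {V : Type*} [AddCommMonoid V] [Module ℂ V]
    {f g : Wsp m13 m23 m33 →ₗ[ℂ] V}
    (h : ∀ k x, InR m13 m23 m33 k x → f (bv m13 m23 m33 k x) = g (bv m13 m23 m33 k x)) :
    f = g := by
  ext p
  simpa only [LinearMap.comp_apply, Finsupp.lsingle_apply, bv_val] using h p.1.1 p.1.2 p.2

lemma Vk_le_iff {k : Fin 4} {U : Submodule ℂ (Wsp m13 m23 m33)} :
    Vk m13 m23 m33 k ≤ U ↔ ∀ x, InR m13 m23 m33 k x → bv m13 m23 m33 k x ∈ U := by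
  rw [Vk, Submodule.span_le, Set.range_subset_iff]
  refine forall_congr' fun x => ⟨fun h _ => h, fun h => ?_⟩
  by_cases hx : InR m13 m23 m33 k x
  · exact h hx
  · rw [bv_of_not_inR hx]
    exact U.zero_mem

lemma bv_mem_Vk (k : Fin 4) (x : ℤ) : bv m13 m23 m33 k x ∈ Vk m13 m23 m33 k :=
  Submodule.subset_span ⟨x, rfl⟩

lemma Vk_le_supported (k : Fin 4) :
    Vk m13 m23 m33 k ≤ Finsupp.supported ℂ ℂ {p : Idx m13 m23 m33 | p.1.1 = k} :=
  Vk_le_iff.mpr fun x hx => by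
    rw [bv_val ⟨(k, x), hx⟩]
    exact Finsupp.single_mem_supported ℂ 1 rfl

lemma eq_of_bv_mem_Vk {k l : Fin 4} {x : ℤ} (hx : InR m13 m23 m33 l x)
    (h : bv m13 m23 m33 l x ∈ Vk m13 m23 m33 k) : l = k := by
  rw [bv_val ⟨(l, x), hx⟩] at h
  have hsupp := Vk_le_supported k h
  rw [Finsupp.mem_supported, Finsupp.support_single _ one_ne_zero] at hsupp
  simpa using hsupp

lemma eq_top_of_forall_Vk_le {U : Submodule ℂ (Wsp m13 m23 m33)}
    (h : ∀ k, Vk m13 m23 m33 k ≤ U) : U = ⊤ := by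
  have hmkQ : U.mkQ = 0 := linearMap_ext_bv fun k x _ => by
    simpa using h k (bv_mem_Vk k x)
  rw [← U.ker_mkQ, hmkQ, LinearMap.ker_zero]

lemma inR_iff_of_zero {x : ℤ} : InR m13 m23 m33 0 x ↔ m23 ≤ x ∧ x ≤ m13 := Iff.rfl

lemma inR_iff_of_one {x : ℤ} : InR m13 m23 m33 1 x ↔ m23 - 1 ≤ x ∧ x ≤ m13 := Iff.rfl

lemma inR_iff_of_two {x : ℤ} : InR m13 m23 m33 2 x ↔ m23 ≤ x ∧ x ≤ m13 - 1 := Iff.rfl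

lemma inR_iff_of_three {x : ℤ} : InR m13 m23 m33 3 x ↔ m23 - 1 ≤ x ∧ x ≤ m13 - 1 := Iff.rfl

lemma M12_le (k : Fin 4) : M12 m13 m23 m33 k ≤ m13 := by
  fin_cases k <;> simp [M12, trip]

lemma le_M22 (k : Fin 4) : m23 - 1 ≤ M22 m13 m23 m33 k := by
  fin_cases k <;> simp [M22, trip]

lemma M32_sub_M12 (k : Fin 4) : M32 m13 m23 m33 k - M12 m13 m23 m33 k = m33 - m13 + k := by
  fin_cases k <;> simp [M32, M12, trip] <;> ring

variable (m13 m23 m33) in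
/-- The vector `v(k, m12)` of highest weight for the even part `gl(2)` in the sector `V_k`; it is
`0` if the sector is empty. -/
def highestVec (k : Fin 4) : Wsp m13 m23 m33 := bv m13 m23 m33 k (M12 m13 m23 m33 k)

end Sectors

namespace GZ

variable {q : ℝ} {m13 m23 m33 : ℤ} (R : GZ q m13 m23 m33) {U : Submodule ℂ (Wsp m13 m23 m33)}

section HighestWeight

lemma E33_sub_E11_bv {k : Fin 4} {x : ℤ} (hx : InR m13 m23 m33 k x) :
    (R.E33 - R.E11) (bv m13 m23 m33 k x) =
      ((M32 m13 m23 m33 k - x : ℤ) : ℂ) • bv m13 m23 m33 k x := by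
  rw [LinearMap.sub_apply, R.hE33 k x hx, R.hE11 k x hx, ← sub_smul, Int.cast_sub]

lemma E33_sub_E11_single (p : Idx m13 m23 m33) (c : ℂ) :
    (R.E33 - R.E11) (Finsupp.single p c) =
      ((M32 m13 m23 m33 p.1.1 - p.1.2 : ℤ) : ℂ) • Finsupp.single p c := by
  rw [single_eq_smul_bv, map_smul, R.E33_sub_E11_bv p.2, smul_comm]

lemma E12_pow_bv_eq_zero {k : Fin 4} {n : ℕ} {x : ℤ} (h : M12 m13 m23 m33 k < x + n) :
    (R.E12 ^ n) (bv m13 m23 m33 k x) = 0 := by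
  by_cases hx : InR m13 m23 m33 k x
  · induction n generalizing x with
    | zero => exact absurd hx.2 (by omega)
    | succ n ih =>
      rw [pow_succ, Module.End.mul_apply, R.hE12 k x hx, map_smul]
      by_cases hx' : InR m13 m23 m33 k (x + 1)
      · rw [ih (by omega) hx', smul_zero]
      · rw [bv_of_not_inR hx', map_zero, smul_zero]
  · rw [bv_of_not_inR hx, map_zero]

lemma isNilpotent_E12 : IsNilpotent R.E12 := by
  refine ⟨(m13 - m23 + 2).toNat, linearMap_ext_bv fun k x hx => R.E12_pow_bv_eq_zero ?_⟩
  have hlow : m23 - 1 ≤ x := (le_M22 k).trans hx.1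
  have hhigh : M12 m13 m23 m33 k ≤ m13 := M12_le k
  omega

lemma E12_apply_add_one {k : Fin 4} {x : ℤ} (hx : InR m13 m23 m33 k x)
    (hx' : InR m13 m23 m33 k (x + 1)) (u : Wsp m13 m23 m33) :
    R.E12 u ⟨(k, x + 1), hx'⟩ =
      (√(qn q (M12 m13 m23 m33 k - x) * qn q (x - M22 m13 m23 m33 k + 1)) : ℝ) *
        u ⟨(k, x), hx⟩ := by
  have hcoord : Finsupp.lapply ⟨(k, x + 1), hx'⟩ ∘ₗ R.E12 =
      ((√(qn q (M12 m13 m23 m33 k - x) * qn q (x - M22 m13 m23 m33 k + 1)) : ℝ) : ℂ) •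
        Finsupp.lapply (R := ℂ) (M := ℂ) (⟨(k, x), hx⟩ : Idx m13 m23 m33) := by
    refine linearMap_ext_bv fun l y hy => ?_
    simp only [LinearMap.comp_apply, LinearMap.smul_apply, Finsupp.lapply_apply, R.hE12 l y hy,
      Finsupp.smul_apply, bv_apply, smul_eq_mul, Prod.mk.injEq, add_left_inj]
    split_ifs with h
    · rw [h.1, h.2]
    · simp only [mul_zero]
  exact LinearMap.congr_fun hcoord u

lemma eq_M12_of_E12_eq_zero (hq : 0 < q) (hq1 : q ≠ 1) {u : Wsp m13 m23 m33}
    (hu : R.E12 u = 0) {p : Idx m13 m23 m33} (hp : p ∈ u.support) :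
    p.1.2 = M12 m13 m23 m33 p.1.1 := by
  obtain ⟨⟨k, x⟩, hx⟩ := p
  by_contra hne
  have hlow : M22 m13 m23 m33 k ≤ x := hx.1
  have hlt : x < M12 m13 m23 m33 k := lt_of_le_of_ne hx.2 hne
  have hcoord := R.E12_apply_add_one (k := k) (x := x) hx ⟨by omega, hlt⟩ u
  rw [hu, Finsupp.zero_apply, zero_eq_mul] at hcoord
  exact hcoord.elim (ofReal_sqrt_qn_mul_qn_ne_zero hq hq1 (by omega) (by omega))
    (Finsupp.mem_support_iff.mp hp)

lemma exists_highestVec_mem (hq : 0 < q) (hq1 : q ≠ 1)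
    (hD : U ∈ Module.End.invtSubmodule (R.E33 - R.E11))
    (h12 : U ∈ Module.End.invtSubmodule R.E12) (hU : U ≠ ⊥) :
    ∃ k, InR m13 m23 m33 k (M12 m13 m23 m33 k) ∧ highestVec m13 m23 m33 k ∈ U := by
  obtain ⟨u, huU, hu0, hu⟩ := exists_ne_zero_mem_ker_of_isNilpotent R.isNilpotent_E12 h12 hU
  have htop : ∀ p ∈ u.support, p.1.2 = M12 m13 m23 m33 p.1.1 := fun p =>
    R.eq_M12_of_E12_eq_zero hq hq1 hu
  have hinj : Set.InjOn (fun p : Idx m13 m23 m33 => ((M32 m13 m23 m33 p.1.1 - p.1.2 : ℤ) : ℂ))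
      u.support := by
    intro p hp p' hp' heq
    have hk : p.1.1 = p'.1.1 := by
      simpa only [htop p hp, htop p' hp', M32_sub_M12, Int.cast_inj, add_right_inj, Nat.cast_inj,
        Fin.val_inj] using heq
    exact Subtype.ext (Prod.ext hk (by rw [htop p hp, htop p' hp', hk]))
  have hsum : ∑ p ∈ u.support, Finsupp.single p (u p) ∈ U := by
    rwa [← Finsupp.sum, Finsupp.sum_single]
  obtain ⟨p, hp⟩ := Finsupp.support_nonempty_iff.mpr hu0
  have hmem : Finsupp.single p (u p) ∈ U :=
    mem_of_sum_eigenvectors_mem hD (fun p' _ => R.E33_sub_E11_single p' (u p')) hinj hsum hp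
  refine ⟨p.1.1, htop p hp ▸ p.2, ?_⟩
  rw [single_eq_smul_bv, htop p hp] at hmem
  exact (U.smul_mem_iff (Finsupp.mem_support_iff.mp hp)).mp hmem

lemma bv_sub_one_mem (hq : 0 < q) (hq1 : q ≠ 1) (h21 : U ∈ Module.End.invtSubmodule R.E21)
    {k : Fin 4} {x : ℤ} (hx : x ≤ M12 m13 m23 m33 k) (hmem : bv m13 m23 m33 k x ∈ U) :
    bv m13 m23 m33 k (x - 1) ∈ U := by
  by_cases hlow : M22 m13 m23 m33 k ≤ x - 1
  · have himage : R.E21 (bv m13 m23 m33 k x) ∈ U := h21 hmem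
    rw [R.hE21 k x ⟨by omega, hx⟩] at himage
    exact (U.smul_mem_iff
      (ofReal_sqrt_qn_mul_qn_ne_zero hq hq1 (by omega) (by omega))).mp himage
  · rw [bv_of_not_inR fun h => hlow h.1]
    exact U.zero_mem

lemma Vk_le_of_highestVec_mem (hq : 0 < q) (hq1 : q ≠ 1)
    (h21 : U ∈ Module.End.invtSubmodule R.E21) {k : Fin 4}
    (hk : highestVec m13 m23 m33 k ∈ U) : Vk m13 m23 m33 k ≤ U := by
  have hmem : ∀ x ≤ M12 m13 m23 m33 k, bv m13 m23 m33 k x ∈ U := by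
    intro x hx
    induction x, hx using Int.leInductionDown with
    | base => exact hk
    | pred x hx ih => exact R.bv_sub_one_mem hq hq1 h21 hx ih
  exact Vk_le_iff.mpr fun x hx => hmem x hx.2

end HighestWeight

section Lowering

lemma Vk_one_le_of_Vk_zero_le (hq : 0 < q) (hq1 : q ≠ 1) (hm : m23 ≤ m13)
    (h21 : U ∈ Module.End.invtSubmodule R.E21) (h32 : U ∈ Module.End.invtSubmodule R.E32)
    (h0 : Vk m13 m23 m33 0 ≤ U) : Vk m13 m23 m33 1 ≤ U := by
  refine R.Vk_le_of_highestVec_mem hq hq1 h21 ?_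
  have himage : R.E32 (bv m13 m23 m33 0 m13) ∈ U := h32 (h0 (bv_mem_Vk 0 m13))
  rw [R.hE32₀ m13 ⟨hm, le_rfl⟩,
    bv_of_not_inR (k := 2) fun h => absurd (inR_iff_of_two.mp h).2 (by omega),
    smul_zero, add_zero] at himage
  exact (U.smul_mem_iff
    (ofReal_sqrt_qn_div_qn_ne_zero hq hq1 (by omega) (by omega))).mp himage

lemma Vk_two_le_of_Vk_zero_le (hq : 0 < q) (hq1 : q ≠ 1)
    (h32 : U ∈ Module.End.invtSubmodule R.E32) (h0 : Vk m13 m23 m33 0 ≤ U)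
    (h1 : Vk m13 m23 m33 1 ≤ U) : Vk m13 m23 m33 2 ≤ U := by
  refine Vk_le_iff.mpr fun x hx => ?_
  rw [inR_iff_of_two] at hx
  have himage : R.E32 (bv m13 m23 m33 0 x) ∈ U := h32 (h0 (bv_mem_Vk 0 x))
  rw [R.hE32₀ x (inR_iff_of_zero.mpr (by omega)),
    U.add_mem_iff_right (U.smul_mem _ (h1 (bv_mem_Vk 1 x))), Complex.ofReal_div] at himage
  exact (U.smul_mem_iff (div_ne_zero
    (ofReal_sqrt_qn_mul_qn_ne_zero hq hq1 (by omega) (by omega))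
    (Complex.ofReal_ne_zero.mpr (qn_pos hq hq1 (by omega)).ne'))).mp himage

lemma Vk_three_le_of_Vk_one_le (hq : 0 < q) (hq1 : q ≠ 1)
    (h32 : U ∈ Module.End.invtSubmodule R.E32) (h1 : Vk m13 m23 m33 1 ≤ U) :
    Vk m13 m23 m33 3 ≤ U := by
  refine Vk_le_iff.mpr fun x hx => ?_
  rw [inR_iff_of_three] at hx
  have himage : R.E32 (bv m13 m23 m33 1 x) ∈ U := h32 (h1 (bv_mem_Vk 1 x))
  rw [R.hE32₁ x (inR_iff_of_one.mpr (by omega)), Complex.ofReal_mul] at himage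
  exact (U.smul_mem_iff (mul_ne_zero (Complex.ofReal_ne_zero.mpr hq.ne')
    (ofReal_sqrt_qn_div_qn_ne_zero hq hq1 (by omega) (by omega)))).mp himage

lemma Vk_three_le_of_Vk_two_le (hq : 0 < q) (hq1 : q ≠ 1) (hm : m23 < m13)
    (h21 : U ∈ Module.End.invtSubmodule R.E21) (h32 : U ∈ Module.End.invtSubmodule R.E32)
    (h2 : Vk m13 m23 m33 2 ≤ U) : Vk m13 m23 m33 3 ≤ U := by
  refine R.Vk_le_of_highestVec_mem hq hq1 h21 ?_
  have himage : R.E32 (bv m13 m23 m33 2 (m13 - 1)) ∈ U := h32 (h2 (bv_mem_Vk 2 (m13 - 1)))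
  rw [R.hE32₂ _ (inR_iff_of_two.mpr (by omega)), U.neg_mem_iff, Complex.ofReal_mul] at himage
  exact (U.smul_mem_iff (mul_ne_zero (Complex.ofReal_ne_zero.mpr hq.ne')
    (ofReal_sqrt_qn_div_qn_ne_zero hq hq1 (by omega) (by omega)))).mp himage

lemma eq_top_of_highestVec_zero_mem (hq : 0 < q) (hq1 : q ≠ 1) (hm : m23 ≤ m13)
    (h21 : U ∈ Module.End.invtSubmodule R.E21) (h32 : U ∈ Module.End.invtSubmodule R.E32)
    (hk : highestVec m13 m23 m33 0 ∈ U) : U = ⊤ := by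
  have h0 : Vk m13 m23 m33 0 ≤ U := R.Vk_le_of_highestVec_mem hq hq1 h21 hk
  have h1 : Vk m13 m23 m33 1 ≤ U := R.Vk_one_le_of_Vk_zero_le hq hq1 hm h21 h32 h0
  exact eq_top_of_forall_Vk_le fun
    | 0 => h0
    | 1 => h1
    | 2 => R.Vk_two_le_of_Vk_zero_le hq hq1 h32 h0 h1
    | 3 => R.Vk_three_le_of_Vk_one_le hq hq1 h32 h1

end Lowering

section InvariantSubspaces

lemma Vk_mem_invtSubmodule_E33_sub_E11 (k : Fin 4) :
    Vk m13 m23 m33 k ∈ Module.End.invtSubmodule (R.E33 - R.E11) :=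
  Vk_le_iff.mpr fun x hx => by
    rw [Submodule.mem_comap, R.E33_sub_E11_bv hx]
    exact Submodule.smul_mem _ _ (bv_mem_Vk k x)

lemma Vk_mem_invtSubmodule_E12 (k : Fin 4) :
    Vk m13 m23 m33 k ∈ Module.End.invtSubmodule R.E12 :=
  Vk_le_iff.mpr fun x hx => by
    rw [Submodule.mem_comap, R.hE12 k x hx]
    exact Submodule.smul_mem _ _ (bv_mem_Vk k (x + 1))

lemma inf_Vk_zero_eq_bot (hq : 0 < q) (hq1 : q ≠ 1)
    (hD : U ∈ Module.End.invtSubmodule (R.E33 - R.E11))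
    (h12 : U ∈ Module.End.invtSubmodule R.E12) (h21 : U ∈ Module.End.invtSubmodule R.E21)
    (h32 : U ∈ Module.End.invtSubmodule R.E32) (hU : U ≠ ⊤) :
    U ⊓ Vk m13 m23 m33 0 = ⊥ := by
  by_contra hbot
  obtain ⟨k, hk, hkU, hkV⟩ := R.exists_highestVec_mem hq hq1
    (Module.End.invtSubmodule.inf_mem hD (R.Vk_mem_invtSubmodule_E33_sub_E11 0))
    (Module.End.invtSubmodule.inf_mem h12 (R.Vk_mem_invtSubmodule_E12 0)) hbot
  obtain rfl : k = 0 := eq_of_bv_mem_Vk hk hkV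
  have hm : m23 ≤ m13 := hk.1
  exact hU (R.eq_top_of_highestVec_zero_mem hq hq1 hm h21 h32 hkU)

lemma Vk_three_le (hq : 0 < q) (hq1 : q ≠ 1)
    (hD : U ∈ Module.End.invtSubmodule (R.E33 - R.E11))
    (h12 : U ∈ Module.End.invtSubmodule R.E12) (h21 : U ∈ Module.End.invtSubmodule R.E21)
    (h32 : U ∈ Module.End.invtSubmodule R.E32) (hU : U ≠ ⊥) :
    Vk m13 m23 m33 3 ≤ U := by
  obtain ⟨k, hk, hkU⟩ := R.exists_highestVec_mem hq hq1 hD h12 hU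
  have hsector : Vk m13 m23 m33 k ≤ U := R.Vk_le_of_highestVec_mem hq hq1 h21 hkU
  match k with
  | 0 => exact le_top.trans_eq (R.eq_top_of_highestVec_zero_mem hq hq1 hk.1 h21 h32 hkU).symm
  | 1 => exact R.Vk_three_le_of_Vk_one_le hq hq1 h32 hsector
  | 2 =>
    have hm : m23 ≤ m13 - 1 := hk.1
    exact R.Vk_three_le_of_Vk_two_le hq hq1 (by omega) h21 h32 hsector
  | 3 => exact hsector

end InvariantSubspaces

end GZ

theorem stmt_12_general {q : ℝ} (hq : 0 < q) (hq1 : q ≠ 1) {m13 m23 m33 : ℤ}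
    (R : GZ q m13 m23 m33) {U : Submodule ℂ (Wsp m13 m23 m33)}
    (h11 : U ∈ Module.End.invtSubmodule R.E11) (h33 : U ∈ Module.End.invtSubmodule R.E33)
    (h12 : U ∈ Module.End.invtSubmodule R.E12) (h21 : U ∈ Module.End.invtSubmodule R.E21)
    (h32 : U ∈ Module.End.invtSubmodule R.E32) :
    (U ≠ ⊤ → U ⊓ Vk m13 m23 m33 0 = ⊥) ∧ (U ≠ ⊥ → Vk m13 m23 m33 3 ≤ U) := by
  have hD : U ∈ Module.End.invtSubmodule (R.E33 - R.E11) := fun u hu =>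
    U.sub_mem (h33 hu) (h11 hu)
  exact ⟨R.inf_Vk_zero_eq_bot hq hq1 hD h12 h21 h32, R.Vk_three_le hq hq1 hD h12 h21 h32⟩

/-- Every proper invariant subspace `U` of `W` intersects the
sector `V_0` trivially, i.e. `U ⊓ V_0 = {0}`; and every nonzero proper
invariant subspace of `W` contains the sector `V_3`. -/
theorem stmt_12 (q : ℝ) (hq : 0 < q) (hq1 : q ≠ 1)
    (m13 m23 m33 : ℤ) (hm : m23 ≤ m13) (R : GZ q m13 m23 m33) :
    (∀ U : Submodule ℂ (Wsp m13 m23 m33), Invariant q m13 m23 m33 R U → U ≠ ⊤ →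
      U ⊓ Vk m13 m23 m33 0 = ⊥) ∧
    (∀ U : Submodule ℂ (Wsp m13 m23 m33), Invariant q m13 m23 m33 R U → U ≠ ⊤ → U ≠ ⊥ →
      Vk m13 m23 m33 3 ≤ U) := by
  have h U (hU : Invariant q m13 m23 m33 R U) := stmt_12_general hq hq1 R
    (hU R.E11 (by simp)) (hU R.E33 (by simp)) (hU R.E12 (by simp)) (hU R.E21 (by simp))
    (hU R.E32 (by simp))
  exact ⟨fun U hU => (h U hU).1, fun U hU _ => (h U hU).2⟩
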